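/- arXiv:1905.08445 — 2 statements merged into one kernel-verified Lean document; each statement's English description precedes it below -/
import Mathlib

section
/- Under Assumption H1 and the Bregman setting with 0 < ε < m/L, the Bregman proximal envelope E and the Bregman proximal gap function G = (F − E)/ε are continuous functions on ℝ^n. -/
open Set Metric Filter Topology
open scoped RealInnerProductSpace

noncomputable section

variable {E : Type*} [NormedAddCommGroup E] [InnerProductSpace ℝ E] [FiniteDimensional ℝ E]

/-- The Bregman distance generated by `K` (with gradient `K'`). -/
def bregD (K : E → ℝ) (K' : E → E) (x y : E) : ℝ := K y - K x - ⟪K' x, y - x⟫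

/-- The Bregman proximal mapping: the set of global minimizers of
`y ↦ ⟪∇f x, y - x⟫ + g y + D(x,y)/ε`. -/
def bregT (f' : E → E) (g : E → ℝ) (K : E → ℝ) (K' : E → E) (ε : ℝ) (x : E) : Set E :=
  {y | ∀ z, ⟪f' x, y - x⟫ + g y + bregD K K' x y / ε ≤ ⟪f' x, z - x⟫ + g z + bregD K K' x z / ε}

/-- The Bregman proximal envelope. -/
def bregEnv (f : E → ℝ) (f' : E → E) (g : E → ℝ) (K : E → ℝ) (K' : E → E) (ε : ℝ) (x : E) : ℝ :=
  ⨅ y : E, (f x + ⟪f' x, y - x⟫ + g y + bregD K K' x y / ε)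

/-!
As a function of `y`, the model minimized in the envelope is a fixed function plus an affine one
whose slope `∇f x - ∇K x / ε` depends continuously on `x`, so the models converge uniformly on
bounded sets as `x → x₀`. The descent lemma and strong convexity bound the model below by
`F y + (m / ε - L) / 2 * ‖y - x‖ ^ 2`; as `F` is bounded below, every point `y` far from `x₀` does
worse than `y = x₀`, for all `x` near `x₀`. Near `x₀` the envelope is thus an infimum over one
fixed ball, on which the convergence is uniform.
-/

section Infimum

variable {α ι : Type*}

theorem ciInf_subtype_eq_of_notMem_le [ConditionallyCompleteLattice α] {f : ι → α}
    (hf : BddBelow (range f)) {s : Set ι} {i₀ : ι} (hi₀ : i₀ ∈ s) (hs : ∀ i ∉ s, f i₀ ≤ f i) :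
    ⨅ i : s, f i = ⨅ i, f i := by
  have : Nonempty s := ⟨⟨i₀, hi₀⟩⟩
  have : Nonempty ι := ⟨i₀⟩
  have hfs : BddBelow (range fun i : s => f i) := hf.mono (range_comp_subset_range _ f)
  refine le_antisymm (le_ciInf fun i => ?_) (le_ciInf fun i => ciInf_le hf i)
  by_cases hi : i ∈ s
  · exact ciInf_le hfs ⟨i, hi⟩
  · exact ciInf_le_of_le hfs ⟨i₀, hi₀⟩ (hs i hi)

theorem abs_ciInf_sub_ciInf_le [Nonempty ι] {f g : ι → ℝ} {δ : ℝ} (hf : BddBelow (range f))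
    (hg : BddBelow (range g)) (hfg : ∀ i, |f i - g i| ≤ δ) :
    |(⨅ i, f i) - ⨅ i, g i| ≤ δ := by
  have hle : ⨅ i, f i ≤ (⨅ i, g i) + δ :=
    le_ciInf_add fun i => ciInf_le_of_le hf i (by linarith [(abs_le.1 (hfg i)).2])
  have hge : ⨅ i, g i ≤ (⨅ i, f i) + δ :=
    le_ciInf_add fun i => ciInf_le_of_le hg i (by linarith [(abs_le.1 (hfg i)).1])
  exact abs_le.2 ⟨by linarith, by linarith⟩

theorem tendsto_ciInf_of_tendstoUniformlyOn {l : Filter α} {F : α → ι → ℝ} {f : ι → ℝ}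
    {s : Set ι} {i₀ : ι} (h : TendstoUniformlyOn F f l s) (hi₀ : i₀ ∈ s)
    (hF : ∀ a, BddBelow (range (F a))) (hf : BddBelow (range f))
    (hFs : ∀ᶠ a in l, ∀ i ∉ s, F a i₀ ≤ F a i) (hfs : ∀ i ∉ s, f i₀ ≤ f i) :
    Tendsto (fun a => ⨅ i, F a i) l (𝓝 (⨅ i, f i)) := by
  have : Nonempty s := ⟨⟨i₀, hi₀⟩⟩
  refine Metric.tendsto_nhds.2 fun δ hδ => ?_
  filter_upwards [Metric.tendstoUniformlyOn_iff.1 h (δ / 2) (half_pos hδ), hFs] with a hclose hFa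
  rw [← ciInf_subtype_eq_of_notMem_le (hF a) hi₀ hFa, ← ciInf_subtype_eq_of_notMem_le hf hi₀ hfs,
    dist_comm]
  refine (abs_ciInf_sub_ciInf_le ?_ ?_ fun i : s => (hclose i i.2).le).trans_lt (half_lt_self hδ)
  · exact hf.mono (range_comp_subset_range _ f)
  · exact (hF a).mono (range_comp_subset_range _ (F a))

end Infimum

section QuadraticGrowth

variable {V : Type*} [SeminormedAddCommGroup V] {φ : V → V → ℝ} {b c : ℝ}

theorem exists_eventually_forall_notMem_closedBall_le (hc : 0 < c)
    (hgrowth : ∀ x y, b + c * ‖y - x‖ ^ 2 ≤ φ x y) {x₀ : V}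
    (hφ : ContinuousAt (fun x => φ x x₀) x₀) :
    ∃ r, 0 ≤ r ∧ ∀ᶠ x in 𝓝 x₀, ∀ y ∉ closedBall x₀ r, φ x x₀ ≤ φ x y := by
  have hlim : Tendsto (fun t : ℝ => b + c * t ^ 2) atTop atTop :=
    tendsto_atTop_add_const_left _ _ ((tendsto_pow_atTop two_ne_zero).const_mul_atTop hc)
  obtain ⟨t, ht, ht₀⟩ :=
    ((hlim.eventually_ge_atTop (φ x₀ x₀ + 1)).and (eventually_ge_atTop 0)).exists
  refine ⟨t + 1, by positivity, ?_⟩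
  filter_upwards [hφ.eventually_le_const (lt_add_one (φ x₀ x₀)), ball_mem_nhds x₀ one_pos]
    with x hx hxball y hy
  have hfar : t ≤ ‖y - x‖ := by
    rw [mem_closedBall, not_le] at hy
    rw [mem_ball] at hxball
    linarith [dist_triangle y x x₀, dist_eq_norm y x]
  calc φ x x₀ ≤ φ x₀ x₀ + 1 := hx
    _ ≤ b + c * t ^ 2 := ht
    _ ≤ b + c * ‖y - x‖ ^ 2 := by gcongr
    _ ≤ φ x y := hgrowth x y

theorem continuous_ciInf_of_quadratic_growth (hc : 0 < c)
    (hgrowth : ∀ x y, b + c * ‖y - x‖ ^ 2 ≤ φ x y)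
    (hunif : ∀ x₀ r, TendstoUniformlyOn φ (φ x₀) (𝓝 x₀) (closedBall x₀ r)) :
    Continuous fun x => ⨅ y, φ x y := by
  refine continuous_iff_continuousAt.2 fun x₀ => ?_
  have hbdd (x : V) : BddBelow (range (φ x)) :=
    ⟨b, forall_mem_range.2 fun y => (le_add_of_nonneg_right (by positivity)).trans (hgrowth x y)⟩
  have hφ : ContinuousAt (fun x => φ x x₀) x₀ :=
    (hunif x₀ 0).tendsto_at (mem_closedBall_self le_rfl)
  obtain ⟨r, hr, hfar⟩ := exists_eventually_forall_notMem_closedBall_le hc hgrowth hφ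
  exact tendsto_ciInf_of_tendstoUniformlyOn (hunif x₀ r) (mem_closedBall_self hr) hbdd (hbdd x₀)
    hfar hfar.self_of_nhds

end QuadraticGrowth

section LipschitzGradient

theorem continuous_of_norm_sub_le_mul {V W : Type*} [SeminormedAddCommGroup V]
    [SeminormedAddCommGroup W] {f : V → W} {C : ℝ} (h : ∀ x y, ‖f x - f y‖ ≤ C * ‖x - y‖) :
    Continuous f :=
  (LipschitzWith.of_dist_le' fun x y => by simpa only [dist_eq_norm] using h x y).continuous

variable {V : Type*} [NormedAddCommGroup V] [InnerProductSpace ℝ V] [CompleteSpace V]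
  {f : V → ℝ} {f' : V → V}

theorem continuous_of_hasGradientAt (hf : ∀ x, HasGradientAt f (f' x) x) : Continuous f :=
  continuous_iff_continuousAt.2 fun x => (hf x).continuousAt

theorem hasDerivAt_add_smul_of_hasGradientAt {x d : V} {t : ℝ} {v : V}
    (hf : HasGradientAt f v (x + t • d)) :
    HasDerivAt (fun s : ℝ => f (x + s • d)) ⟪v, d⟫ t := by
  have hline : HasDerivAt (fun s : ℝ => x + s • d) d t := by
    simpa only [id, one_smul] using ((hasDerivAt_id t).smul_const d).const_add x
  exact (hf.hasFDerivAt.comp_hasDerivAt t hline).congr_deriv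
    InnerProductSpace.toDual_apply_apply

theorem le_add_inner_add_mul_norm_sub_sq {L : ℝ} (hf : ∀ x, HasGradientAt f (f' x) x)
    (hlip : ∀ x y, ‖f' x - f' y‖ ≤ L * ‖x - y‖) (x y : V) :
    f y ≤ f x + ⟪f' x, y - x⟫ + L / 2 * ‖y - x‖ ^ 2 := by
  set d := y - x
  let B : ℝ → ℝ := fun t => f x + t * ⟪f' x, d⟫ + L / 2 * ‖d‖ ^ 2 * t ^ 2
  have hline (t : ℝ) : HasDerivAt (fun s : ℝ => f (x + s • d)) ⟪f' (x + t • d), d⟫ t :=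
    hasDerivAt_add_smul_of_hasGradientAt (hf _)
  have hB (t : ℝ) : HasDerivAt B (⟪f' x, d⟫ + L * ‖d‖ ^ 2 * t) t := by
    have hlin := ((hasDerivAt_id t).mul_const ⟪f' x, d⟫).const_add (f x)
    have hquad := (hasDerivAt_pow 2 t).const_mul (L / 2 * ‖d‖ ^ 2)
    exact (hlin.add hquad).congr_deriv (by push_cast; ring)
  have hslope (t : ℝ) (ht : 0 ≤ t) :
      ⟪f' (x + t • d), d⟫ ≤ ⟪f' x, d⟫ + L * ‖d‖ ^ 2 * t := by
    rw [← sub_le_iff_le_add', ← inner_sub_left]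
    calc ⟪f' (x + t • d) - f' x, d⟫ ≤ ‖f' (x + t • d) - f' x‖ * ‖d‖ := real_inner_le_norm _ _
      _ ≤ L * ‖x + t • d - x‖ * ‖d‖ := by gcongr; exact hlip _ _
      _ = L * ‖d‖ ^ 2 * t := by
        rw [add_sub_cancel_left, norm_smul, Real.norm_of_nonneg ht]; ring
  have hle : f (x + (1 : ℝ) • d) ≤ B 1 :=
    image_le_of_deriv_right_le_deriv_boundary
      (fun t _ => (hline t).continuousAt.continuousWithinAt)
      (fun t _ => (hline t).hasDerivWithinAt) (by simp [B])
      (fun t _ => (hB t).continuousAt.continuousWithinAt)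
      (fun t _ => (hB t).hasDerivWithinAt) (fun t ht => hslope t ht.1) (right_mem_Icc.2 zero_le_one)
  simpa only [B, d, one_smul, add_sub_cancel, one_mul, one_pow, mul_one] using hle

end LipschitzGradient

section BregmanModel

variable {V : Type*} [NormedAddCommGroup V] [InnerProductSpace ℝ V]

/-- The Bregman proximal model of `f + g` at `x`: the linearization of `f` at `x`, plus `g`, plus
the Bregman distance scaled by `1 / ε`. The envelope `bregEnv` is its infimum over `y`. -/
def bregModel (f : V → ℝ) (f' : V → V) (g : V → ℝ) (K : V → ℝ) (K' : V → V) (ε : ℝ) (x y : V) :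
    ℝ :=
  f x + ⟪f' x, y - x⟫ + g y + bregD K K' x y / ε

variable {f g K : V → ℝ} {f' K' : V → V} {ε m L : ℝ}

theorem continuous_bregModel_left (hf : Continuous f) (hf' : Continuous f') (hK : Continuous K)
    (hK' : Continuous K') (y : V) : Continuous fun x => bregModel f f' g K K' ε x y := by
  unfold bregModel bregD
  fun_prop

theorem bregModel_sub_bregModel (x x₀ y z : V) :
    bregModel f f' g K K' ε x y - bregModel f f' g K K' ε x₀ y =
      bregModel f f' g K K' ε x z - bregModel f f' g K K' ε x₀ z +
        ⟪(f' x - ε⁻¹ • K' x) - (f' x₀ - ε⁻¹ • K' x₀), y - z⟫ := by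
  simp only [bregModel, bregD, inner_sub_left, inner_sub_right, real_inner_smul_left]
  ring

theorem tendstoUniformlyOn_bregModel (hf : Continuous f) (hf' : Continuous f')
    (hK : Continuous K) (hK' : Continuous K') (x₀ z : V) (r : ℝ) :
    TendstoUniformlyOn (bregModel f f' g K K' ε) (bregModel f f' g K K' ε x₀) (𝓝 x₀)
      (closedBall z r) := by
  let p : V → ℝ := fun x => bregModel f f' g K K' ε x z
  let v : V → V := fun x => f' x - ε⁻¹ • K' x
  have hp : Continuous p := continuous_bregModel_left hf hf' hK hK' z
  have hv : Continuous v := hf'.sub (hK'.const_smul _)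
  have hbound : Tendsto (fun x => |p x - p x₀| + ‖v x - v x₀‖ * r) (𝓝 x₀) (𝓝 0) := by
    have hcont : Continuous fun x => |p x - p x₀| + ‖v x - v x₀‖ * r := by fun_prop
    simpa using hcont.tendsto x₀
  refine Metric.tendstoUniformlyOn_iff.2 fun δ hδ => ?_
  filter_upwards [hbound.eventually_lt_const hδ] with x hx y hy
  rw [mem_closedBall, dist_eq_norm] at hy
  rw [dist_comm, Real.dist_eq, bregModel_sub_bregModel x x₀ y z]
  calc |p x - p x₀ + ⟪v x - v x₀, y - z⟫|
      ≤ |p x - p x₀| + |⟪v x - v x₀, y - z⟫| := abs_add_le _ _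
    _ ≤ |p x - p x₀| + ‖v x - v x₀‖ * ‖y - z‖ := by gcongr; exact abs_real_inner_le_norm _ _
    _ ≤ |p x - p x₀| + ‖v x - v x₀‖ * r := by gcongr
    _ < δ := hx

theorem add_mul_norm_sub_sq_le_bregModel {x y : V} (hε : 0 < ε)
    (hf : f y ≤ f x + ⟪f' x, y - x⟫ + L / 2 * ‖y - x‖ ^ 2)
    (hK : K x + ⟪K' x, y - x⟫ + m / 2 * ‖y - x‖ ^ 2 ≤ K y) :
    f y + g y + (m / ε - L) / 2 * ‖y - x‖ ^ 2 ≤ bregModel f f' g K K' ε x y := by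
  have hD : m / 2 * ‖y - x‖ ^ 2 / ε ≤ bregD K K' x y / ε := by
    unfold bregD
    gcongr
    linarith
  have hsplit : (m / ε - L) / 2 * ‖y - x‖ ^ 2 =
      m / 2 * ‖y - x‖ ^ 2 / ε - L / 2 * ‖y - x‖ ^ 2 := by ring
  unfold bregModel
  linarith

theorem continuous_bregEnv (hf : Continuous f) (hf' : Continuous f') (hK : Continuous K)
    (hK' : Continuous K') (hF : BddBelow (range fun x => f x + g x)) (hε : 0 < ε)
    (hεL : ε * L < m) (hfL : ∀ x y, f y ≤ f x + ⟪f' x, y - x⟫ + L / 2 * ‖y - x‖ ^ 2)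
    (hKm : ∀ x y, K x + ⟪K' x, y - x⟫ + m / 2 * ‖y - x‖ ^ 2 ≤ K y) :
    Continuous (bregEnv f f' g K K' ε) := by
  obtain ⟨b, hb⟩ := hF
  have hc : 0 < (m / ε - L) / 2 := half_pos (sub_pos.2 ((lt_div_iff₀' hε).2 hεL))
  have hgrowth (x y : V) :
      b + (m / ε - L) / 2 * ‖y - x‖ ^ 2 ≤ bregModel f f' g K K' ε x y :=
    calc b + (m / ε - L) / 2 * ‖y - x‖ ^ 2
        ≤ f y + g y + (m / ε - L) / 2 * ‖y - x‖ ^ 2 := by gcongr; exact hb (mem_range_self y)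
      _ ≤ bregModel f f' g K K' ε x y :=
        add_mul_norm_sub_sq_le_bregModel hε (hfL x y) (hKm x y)
  exact continuous_ciInf_of_quadratic_growth hc hgrowth fun x₀ r =>
    tendstoUniformlyOn_bregModel hf hf' hK hK' x₀ x₀ r

end BregmanModel

theorem stmt5_general {V : Type*} [NormedAddCommGroup V] [InnerProductSpace ℝ V] [CompleteSpace V]
    {f g : V → ℝ} {f' : V → V} {L : ℝ} (hf : ∀ x, HasGradientAt f (f' x) x)
    (hlip : ∀ x y, ‖f' x - f' y‖ ≤ L * ‖x - y‖) (hg : Continuous g)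
    (hF : BddBelow (range fun x => f x + g x)) {K : V → ℝ} {K' : V → V} {m : ℝ}
    (hK : ∀ x, HasGradientAt K (K' x) x)
    (hKstrong : ∀ x y, K x + ⟪K' x, y - x⟫ + m / 2 * ‖y - x‖ ^ 2 ≤ K y)
    (hK' : Continuous K') {ε : ℝ} (hε : 0 < ε) (hεL : ε * L < m) :
    Continuous (bregEnv f f' g K K' ε) ∧
    Continuous fun x => (f x + g x - bregEnv f f' g K K' ε x) / ε := by
  have hfc : Continuous f := continuous_of_hasGradientAt hf
  have henv : Continuous (bregEnv f f' g K K' ε) :=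
    continuous_bregEnv hfc (continuous_of_norm_sub_le_mul hlip) (continuous_of_hasGradientAt hK)
      hK' hF hε hεL (le_add_inner_add_mul_norm_sub_sq hf hlip) hKstrong
  exact ⟨henv, ((hfc.add hg).sub henv).div_const ε⟩

/-- Continuity of the Bregman proximal envelope `E` and of the gap function
`G = (F - E)/ε` when `0 < ε < m/L`. -/
theorem stmt5
    (f g : E → ℝ) (f' : E → E) (L : ℝ)
    (hL : 0 < L)
    (hf : ∀ x, HasGradientAt f (f' x) x)
    (hlip : ∀ x y, ‖f' x - f' y‖ ≤ L * ‖x - y‖)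
    (hg : Continuous g)
    (hlevel : ∀ r : ℝ, Bornology.IsBounded {x : E | f x + g x ≤ r})
    (K : E → ℝ) (K' : E → E) (m M : ℝ)
    (hm : 0 < m) (hmM : m ≤ M)
    (hK : ∀ x, HasGradientAt K (K' x) x)
    (hKstrong : ∀ x y : E, K x + ⟪K' x, y - x⟫ + m / 2 * ‖y - x‖ ^ 2 ≤ K y)
    (hKlip : ∀ x y, ‖K' x - K' y‖ ≤ M * ‖x - y‖)
    (ε : ℝ) (hε : 0 < ε)
    (hεL : ε * L < m) :
    Continuous (bregEnv f f' g K K' ε) ∧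
    Continuous (fun x : E => ((f x + g x) - bregEnv f f' g K K' ε x) / ε) := by
  obtain ⟨z, hz⟩ := ((continuous_of_hasGradientAt hf).add hg).exists_forall_le_of_isBounded 0
    (hlevel _)
  exact stmt5_general hf hlip hg ⟨f z + g z, forall_mem_range.2 hz⟩ hK hKstrong
    (continuous_of_norm_sub_le_mul hKlip) hε hεL
end
end

section
/- Level-set subdifferential error bound implies level-set Bregman proximal error bound: under Assumption H1 and the Bregman setting with 0 < ε < m/L, suppose there exist η, ν, c₃ > 0 and γ > 0 such that infDist(x, [F ≤ F̄])^γ ≤ c₃·‖ξ‖ for every x ∈ 𝔅(x̄;η,ν) and every ξ ∈ ∂_P F(x). Then there exist N > (2εν/(m − εL))/(η/2)² and θ > 0 such that for all x ∈ 𝔅(x̄; η/2, ν/N), infDist(x, [F ≤ F̄])^p ≤ θ · infDist(x, T(x)), where p = max{γ, 1}. -/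
open Set Metric Filter Topology
open scoped RealInnerProductSpace

noncomputable section

variable {E : Type*} [NormedAddCommGroup E] [InnerProductSpace ℝ E] [FiniteDimensional ℝ E]

/-- The proximal subdifferential of `ψ` at `x`. -/
def proxSubdiff (ψ : E → ℝ) (x : E) : Set E :=
  {ξ | ∃ ρ > (0:ℝ), ∃ η > (0:ℝ), ∀ y, ‖y - x‖ < η →
    ψ y ≥ ψ x + ⟪ξ, y - x⟫ - ρ * ‖y - x‖ ^ 2}

/-!
A Bregman proximal gradient step from `y` minimizes `F z + D_h(y, z)`, where `F = f + g`, for the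
kernel `h = ε⁻¹ K - f`, because linearizing `f` at `y` amounts to subtracting its Bregman distance
from `F`. The gradient of `h` is Lipschitz and `D_h(y, z) ≥ a ‖z - y‖²` with `a = (m / ε - L) /
2`, so that a step from `y` to `w` decreases `F` by at least `a ‖w - y‖²`, and `∇h y - ∇h w`, of
norm `O(‖w - y‖)`, is a proximal subgradient of `F` at `w`. If `y` is near `xbar` and `F y` near
`F xbar`, then `w` either lies in the sublevel set `S = {F ≤ F xbar}` or satisfies the hypotheses
of the error bound; in both cases `infDist w S ^ γ = O(‖w - y‖)`, and `infDist y S ≤ infDist w S +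
‖w - y‖` gives the claim.
-/

theorem rpow_le_rpow_sub_mul_rpow {u R q p : ℝ} (hu : 0 ≤ u) (huR : u ≤ R) (hq : 0 ≤ q)
    (hqp : q ≤ p) : u ^ p ≤ R ^ (p - q) * u ^ q := by
  have hpq : 0 ≤ p - q := sub_nonneg.2 hqp
  calc u ^ p = u ^ (p - q) * u ^ q := by rw [← Real.rpow_add_of_nonneg hu hpq hq, sub_add_cancel]
    _ ≤ R ^ (p - q) * u ^ q := by gcongr

theorem rpow_le_mul_of_le_add_of_rpow_le {s r d R C γ p : ℝ} (hs : 0 ≤ s) (hr : 0 ≤ r)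
    (hd : 0 ≤ d) (hsR : s ≤ R) (hsrd : s ≤ r + d) (hγ : 0 ≤ γ) (hγp : γ ≤ p) (hp : 1 ≤ p)
    (hrd : r ^ γ ≤ C * d) :
    s ^ p ≤ (2 ^ γ * R ^ (p - γ) * C + 2 * R ^ (p - 1)) * d := by
  have hR : 0 ≤ R := hs.trans hsR
  have hCd : 0 ≤ C * d := (Real.rpow_nonneg hr γ).trans hrd
  rcases le_total d r with hdr | hrd_le
  · calc s ^ p ≤ R ^ (p - γ) * s ^ γ := rpow_le_rpow_sub_mul_rpow hs hsR hγ hγp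
      _ ≤ R ^ (p - γ) * (2 * r) ^ γ := by gcongr; linarith
      _ = 2 ^ γ * R ^ (p - γ) * r ^ γ := by rw [Real.mul_rpow zero_le_two hr]; ring
      _ ≤ 2 ^ γ * R ^ (p - γ) * (C * d) + 2 * R ^ (p - 1) * d :=
        le_add_of_le_of_nonneg (by gcongr) (by positivity)
      _ = _ := by ring
  · calc s ^ p ≤ R ^ (p - 1) * s := by
          simpa only [Real.rpow_one] using rpow_le_rpow_sub_mul_rpow hs hsR zero_le_one hp
      _ ≤ R ^ (p - 1) * (2 * d) := by gcongr; linarith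
      _ ≤ 2 ^ γ * R ^ (p - γ) * (C * d) + R ^ (p - 1) * (2 * d) :=
        le_add_of_nonneg_left (by positivity)
      _ = _ := by ring

theorem infDist_rpow_max_le_mul_dist {X : Type*} [PseudoMetricSpace X] {S : Set X} {x y : X}
    {R C γ : ℝ} (hγ : 0 ≤ γ) (hyR : infDist y S ≤ R) (hx : infDist x S ^ γ ≤ C * dist y x) :
    infDist y S ^ max γ 1 ≤
      (2 ^ γ * R ^ (max γ 1 - γ) * C + 2 * R ^ (max γ 1 - 1)) * dist y x :=
  rpow_le_mul_of_le_add_of_rpow_le infDist_nonneg infDist_nonneg dist_nonneg hyR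
    infDist_le_infDist_add_dist hγ (le_max_left γ 1) (le_max_right γ 1) hx

theorem norm_image_sub_sub_le_of_norm_fderiv_sub_le {V W : Type*} [NormedAddCommGroup V]
    [NormedSpace ℝ V] [NormedAddCommGroup W] [NormedSpace ℝ W] {φ : V → W} {φ' : V → V →L[ℝ] W}
    {C : ℝ} {x : V} (hφ : ∀ z, HasFDerivAt φ (φ' z) z)
    (hlip : ∀ z, ‖φ' z - φ' x‖ ≤ C * ‖z - x‖) (y : V) :
    ‖φ y - φ x - φ' x (y - x)‖ ≤ C / 2 * ‖y - x‖ ^ 2 := by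
  set v := y - x with hv
  have hline (t : ℝ) : HasDerivAt (fun t : ℝ => x + t • v) v t := by
    simpa only [id_eq, one_smul] using ((hasDerivAt_id t).smul_const v).const_add x
  have hlinear (t : ℝ) : HasDerivAt (fun t : ℝ => t • φ' x v) (φ' x v) t := by
    simpa only [id_eq, one_smul] using (hasDerivAt_id t).smul_const (φ' x v)
  have hrem (t : ℝ) : HasDerivAt (fun t : ℝ => φ (x + t • v) - φ x - t • φ' x v)
      (φ' (x + t • v) v - φ' x v) t :=
    (((hφ _).comp_hasDerivAt t (hline t)).sub_const (φ x)).sub (hlinear t)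
  have hquad (t : ℝ) : HasDerivAt (fun t : ℝ => C / 2 * ‖v‖ ^ 2 * t ^ 2) (C * ‖v‖ ^ 2 * t) t := by
    refine ((hasDerivAt_pow 2 t).const_mul (C / 2 * ‖v‖ ^ 2)).congr_deriv ?_
    norm_num
    ring
  have hbound (t : ℝ) (ht : t ∈ Ico (0 : ℝ) 1) :
      ‖φ' (x + t • v) v - φ' x v‖ ≤ C * ‖v‖ ^ 2 * t :=
    calc ‖φ' (x + t • v) v - φ' x v‖ ≤ ‖φ' (x + t • v) - φ' x‖ * ‖v‖ :=
          (φ' (x + t • v) - φ' x).le_opNorm v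
      _ ≤ C * ‖x + t • v - x‖ * ‖v‖ := by gcongr; exact hlip _
      _ = C * ‖v‖ ^ 2 * t := by
        rw [add_sub_cancel_left, norm_smul, Real.norm_of_nonneg ht.1]; ring
  have hone := image_norm_le_of_norm_deriv_right_le_deriv_boundary
    (fun t _ => (hrem t).continuousAt.continuousWithinAt) (fun t _ => (hrem t).hasDerivWithinAt)
    (by simp) hquad hbound (right_mem_Icc.2 zero_le_one)
  simpa only [one_smul, hv, add_sub_cancel, one_pow, mul_one] using hone

theorem exists_isMinOn_univ_of_isBounded_sublevel {X : Type*} [PseudoMetricSpace X] [ProperSpace X]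
    {φ : X → ℝ} (hφ : LowerSemicontinuous φ) {x₀ : X}
    (hbdd : Bornology.IsBounded {x | φ x ≤ φ x₀}) : ∃ x, IsMinOn φ univ x := by
  have hcompact : IsCompact {x | φ x ≤ φ x₀} :=
    isCompact_of_isClosed_isBounded (hφ.isClosed_preimage (φ x₀)) hbdd
  obtain ⟨x, hx, hmin⟩ :=
    (hφ.lowerSemicontinuousOn _).exists_isMinOn ⟨x₀, le_refl (φ x₀)⟩ hcompact
  refine ⟨x, fun z _ => ?_⟩
  rcases le_total (φ z) (φ x₀) with hz | hz
  · exact hmin hz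
  · exact le_trans hx hz

section InnerProductSpace

variable {H : Type*} [NormedAddCommGroup H] [InnerProductSpace ℝ H]

theorem mem_proxSubdiff_of_forall_le {ψ : H → ℝ} {x ξ : H} {ρ : ℝ}
    (hξ : ∀ y, ψ x + ⟪ξ, y - x⟫ - ρ * ‖y - x‖ ^ 2 ≤ ψ y) : ξ ∈ proxSubdiff ψ x := by
  refine ⟨max ρ 1, by positivity, 1, one_pos, fun y _ => ?_⟩
  have hρ : ρ * ‖y - x‖ ^ 2 ≤ max ρ 1 * ‖y - x‖ ^ 2 := by gcongr; exact le_max_left _ _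
  linarith [hξ y]

/-- The level-set subdifferential error bound of exponent `γ` for `F` at `xbar`, on the region
`𝔅(xbar; η, ν)` and with constant `c`. -/
def LevelSetSubdiffErrorBound (F : H → ℝ) (xbar : H) (γ η ν c : ℝ) : Prop :=
  ∀ y, ‖y - xbar‖ < η → F xbar < F y → F y < F xbar + ν →
    ∀ ξ ∈ proxSubdiff F y, infDist y {z | F z ≤ F xbar} ^ γ ≤ c * ‖ξ‖

theorem bregD_self (h : H → ℝ) (h' : H → H) (x : H) : bregD h h' x x = 0 := by
  simp [bregD]

theorem bregD_smul_sub (c : ℝ) (K f : H → ℝ) (K' f' : H → H) (x y : H) :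
    bregD (c • K - f) (c • K' - f') x y = c * bregD K K' x y - bregD f f' x y := by
  simp only [bregD, Pi.sub_apply, Pi.smul_apply, smul_eq_mul, inner_sub_left,
    real_inner_smul_left]
  ring

theorem bregD_three_point (h : H → ℝ) (h' : H → H) (x y z : H) :
    bregD h h' x z = bregD h h' x y + bregD h h' y z + ⟪h' y - h' x, z - y⟫ := by
  have hsplit : ⟪h' x, z - x⟫ = ⟪h' x, z - y⟫ + ⟪h' x, y - x⟫ := by
    rw [← inner_add_right, sub_add_sub_cancel]
  simp only [bregD, inner_sub_left, hsplit]
  ring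

theorem mem_bregT_iff_isMinOn {f g K : H → ℝ} {f' K' : H → H} {ε : ℝ} {y w : H} :
    w ∈ bregT f' g K K' ε y ↔
      IsMinOn (fun z => (f + g) z + bregD (ε⁻¹ • K - f) (ε⁻¹ • K' - f') y z) univ w := by
  have hobj (z : H) : (f + g) z + bregD (ε⁻¹ • K - f) (ε⁻¹ • K' - f') y z =
      f y + (⟪f' y, z - y⟫ + g z + bregD K K' y z / ε) := by
    rw [bregD_smul_sub]
    simp only [bregD, Pi.add_apply]
    ring
  simp only [isMinOn_univ_iff, hobj, add_le_add_iff_left, bregT, mem_ofPred_eq]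

section ProximalPoint

variable {F h : H → ℝ} {h' : H → H} {a Λ : ℝ} {y w : H}

theorem add_mul_sq_le_of_isMinOn_add_bregD (hstrong : ∀ z, a * ‖z - y‖ ^ 2 ≤ bregD h h' y z)
    (hw : IsMinOn (fun z => F z + bregD h h' y z) univ w) :
    F w + a * ‖w - y‖ ^ 2 ≤ F y := by
  have hmin : F w + bregD h h' y w ≤ F y + bregD h h' y y := hw (mem_univ y)
  rw [bregD_self] at hmin
  linarith [hstrong w]

theorem exists_isMinOn_add_bregD [ProperSpace H] (hF : LowerSemicontinuous F) (hh : Continuous h)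
    (hnonneg : ∀ z, 0 ≤ bregD h h' y z) (hbdd : Bornology.IsBounded {z | F z ≤ F y}) :
    ∃ w, IsMinOn (fun z => F z + bregD h h' y z) univ w := by
  have hD : Continuous (bregD h h' y) := by unfold bregD; fun_prop
  refine exists_isMinOn_univ_of_isBounded_sublevel (hF.add hD.lowerSemicontinuous) (x₀ := y)
    (hbdd.subset fun z hz => ?_)
  rw [mem_ofPred_eq, bregD_self, add_zero] at hz
  exact (le_add_of_nonneg_right (hnonneg z)).trans hz

variable [CompleteSpace H]

theorem abs_bregD_le (hh : ∀ x, HasGradientAt h (h' x) x)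
    (hlip : ∀ x y, ‖h' x - h' y‖ ≤ Λ * ‖x - y‖) (x y : H) :
    |bregD h h' x y| ≤ Λ / 2 * ‖y - x‖ ^ 2 := by
  refine norm_image_sub_sub_le_of_norm_fderiv_sub_le (fun z => (hh z).hasFDerivAt) (fun z => ?_) y
  rw [← map_sub, LinearIsometryEquiv.norm_map]
  exact hlip z x

theorem sub_mem_proxSubdiff_of_isMinOn_add_bregD (hh : ∀ x, HasGradientAt h (h' x) x)
    (hlip : ∀ x y, ‖h' x - h' y‖ ≤ Λ * ‖x - y‖)
    (hw : IsMinOn (fun z => F z + bregD h h' y z) univ w) :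
    h' y - h' w ∈ proxSubdiff F w := by
  refine mem_proxSubdiff_of_forall_le (ρ := Λ / 2) fun z => ?_
  have hmin : F w + bregD h h' y w ≤ F z + bregD h h' y z := hw (mem_univ z)
  have hquad : bregD h h' w z ≤ Λ / 2 * ‖z - w‖ ^ 2 :=
    (le_abs_self _).trans (abs_bregD_le hh hlip w z)
  rw [bregD_three_point h h' y w z] at hmin
  have hneg : ⟪h' y - h' w, z - w⟫ = -⟪h' w - h' y, z - w⟫ := by rw [← inner_neg_left, neg_sub]
  linarith

variable {xbar : H} {γ η ν c : ℝ}

theorem LevelSetSubdiffErrorBound.infDist_rpow_le_of_isMinOn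
    (hEB : LevelSetSubdiffErrorBound F xbar γ η ν c) (hγ : 0 < γ) (hη : 0 < η) (hc : 0 ≤ c)
    (ha : 0 < a) (hΛ : 0 ≤ Λ) (hh : ∀ x, HasGradientAt h (h' x) x)
    (hlip : ∀ x y, ‖h' x - h' y‖ ≤ Λ * ‖x - y‖)
    (hstrong : ∀ z, a * ‖z - y‖ ^ 2 ≤ bregD h h' y z)
    (hy : ‖y - xbar‖ < η / 2) (hFy : F y < F xbar + min ν (a * (η / 2) ^ 2))
    (hw : IsMinOn (fun z => F z + bregD h h' y z) univ w) :
    infDist w {z | F z ≤ F xbar} ^ γ ≤ c * Λ * dist y w := by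
  by_cases hFw : F w ≤ F xbar
  · rw [infDist_zero_of_mem (by exact hFw), Real.zero_rpow hγ.ne']
    positivity
  push Not at hFw
  have hdecr : F w + a * ‖w - y‖ ^ 2 ≤ F y := add_mul_sq_le_of_isMinOn_add_bregD hstrong hw
  have hFyν : F y < F xbar + ν := hFy.trans_le (by gcongr; exact min_le_left _ _)
  have hFya : F y < F xbar + a * (η / 2) ^ 2 := hFy.trans_le (by gcongr; exact min_le_right _ _)
  have hwy : ‖w - y‖ < η / 2 := by
    have hsq : ‖w - y‖ ^ 2 < (η / 2) ^ 2 := lt_of_mul_lt_mul_left (by linarith) ha.le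
    exact lt_of_pow_lt_pow_left₀ 2 (by positivity) hsq
  have hwxbar : ‖w - xbar‖ < η := by
    linarith [norm_sub_le_norm_sub_add_norm_sub w y xbar]
  have hFwν : F w < F xbar + ν := by linarith [mul_nonneg ha.le (sq_nonneg ‖w - y‖)]
  calc infDist w {z | F z ≤ F xbar} ^ γ ≤ c * ‖h' y - h' w‖ :=
        hEB w hwxbar hFw hFwν _ (sub_mem_proxSubdiff_of_isMinOn_add_bregD hh hlip hw)
    _ ≤ c * (Λ * ‖y - w‖) := by gcongr; exact hlip y w
    _ = c * Λ * dist y w := by rw [dist_eq_norm, mul_assoc]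

end ProximalPoint

section ProximalGradient

variable {f g K : H → ℝ} {f' K' : H → H} {L m M ε : ℝ}

theorem norm_smul_sub_sub_le (hlip : ∀ x y, ‖f' x - f' y‖ ≤ L * ‖x - y‖)
    (hKlip : ∀ x y, ‖K' x - K' y‖ ≤ M * ‖x - y‖) (hε : 0 ≤ ε) (x y : H) :
    ‖(ε⁻¹ • K' - f') x - (ε⁻¹ • K' - f') y‖ ≤ (M / ε + L) * ‖x - y‖ :=
  calc ‖(ε⁻¹ • K' - f') x - (ε⁻¹ • K' - f') y‖
      = ‖ε⁻¹ • (K' x - K' y) - (f' x - f' y)‖ := by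
        congr 1
        simp only [Pi.sub_apply, Pi.smul_apply]
        module
    _ ≤ ‖ε⁻¹ • (K' x - K' y)‖ + ‖f' x - f' y‖ := norm_sub_le _ _
    _ ≤ ε⁻¹ * (M * ‖x - y‖) + L * ‖x - y‖ := by
        rw [norm_smul, Real.norm_of_nonneg (inv_nonneg.2 hε)]
        gcongr
        exacts [hKlip x y, hlip x y]
    _ = (M / ε + L) * ‖x - y‖ := by ring

theorem hasGradientAt_smul_sub [CompleteSpace H] {x u v : H} (hK : HasGradientAt K u x)
    (hf : HasGradientAt f v x) (c : ℝ) : HasGradientAt (c • K - f) (c • u - v) x := by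
  rw [hasGradientAt_iff_hasFDerivAt, map_sub, map_smul]
  exact (hK.hasFDerivAt.const_smul c).sub hf.hasFDerivAt

theorem mul_sq_le_bregD_smul_sub [CompleteSpace H] (hf : ∀ x, HasGradientAt f (f' x) x)
    (hlip : ∀ x y, ‖f' x - f' y‖ ≤ L * ‖x - y‖)
    (hKstrong : ∀ x y, K x + ⟪K' x, y - x⟫ + m / 2 * ‖y - x‖ ^ 2 ≤ K y) (hε : 0 ≤ ε) (x y : H) :
    (m / ε - L) / 2 * ‖y - x‖ ^ 2 ≤ bregD (ε⁻¹ • K - f) (ε⁻¹ • K' - f') x y := by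
  have hDK : m / 2 * ‖y - x‖ ^ 2 ≤ bregD K K' x y := by unfold bregD; linarith [hKstrong x y]
  have hDf : bregD f f' x y ≤ L / 2 * ‖y - x‖ ^ 2 :=
    (le_abs_self _).trans (abs_bregD_le hf hlip x y)
  calc (m / ε - L) / 2 * ‖y - x‖ ^ 2
      = ε⁻¹ * (m / 2 * ‖y - x‖ ^ 2) - L / 2 * ‖y - x‖ ^ 2 := by ring
    _ ≤ ε⁻¹ * bregD K K' x y - bregD f f' x y := by gcongr
    _ = _ := (bregD_smul_sub _ _ _ _ _ _ _).symm

theorem bregT_nonempty [ProperSpace H] {y : H} (hf : ∀ x, HasGradientAt f (f' x) x)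
    (hlip : ∀ x y, ‖f' x - f' y‖ ≤ L * ‖x - y‖) (hg : LowerSemicontinuous g)
    (hbdd : Bornology.IsBounded {z | f z + g z ≤ f y + g y})
    (hK : ∀ x, HasGradientAt K (K' x) x)
    (hKstrong : ∀ x y, K x + ⟪K' x, y - x⟫ + m / 2 * ‖y - x‖ ^ 2 ≤ K y) (hε : 0 < ε)
    (hεL : ε * L ≤ m) : (bregT f' g K K' ε y).Nonempty := by
  have hfc : Continuous f := continuous_iff_continuousAt.2 fun x => (hf x).continuousAt
  have hKc : Continuous K := continuous_iff_continuousAt.2 fun x => (hK x).continuousAt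
  have hgap : 0 ≤ m / ε - L := sub_nonneg.2 ((le_div_iff₀' hε).2 hεL)
  obtain ⟨w, hw⟩ := exists_isMinOn_add_bregD (hfc.lowerSemicontinuous.add hg)
    ((hKc.const_smul ε⁻¹).sub hfc)
    (fun z => (by positivity : (0 : ℝ) ≤ (m / ε - L) / 2 * ‖z - y‖ ^ 2).trans
      (mul_sq_le_bregD_smul_sub hf hlip hKstrong hε.le y z)) hbdd
  exact ⟨w, mem_bregT_iff_isMinOn.2 hw⟩

theorem stmt9_general [CompleteSpace H] {xbar : H} {γ η ν c₃ : ℝ} (hL : 0 ≤ L)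
    (hf : ∀ x, HasGradientAt f (f' x) x) (hlip : ∀ x y, ‖f' x - f' y‖ ≤ L * ‖x - y‖)
    (hM : 0 ≤ M) (hK : ∀ x, HasGradientAt K (K' x) x)
    (hKstrong : ∀ x y, K x + ⟪K' x, y - x⟫ + m / 2 * ‖y - x‖ ^ 2 ≤ K y)
    (hKlip : ∀ x y, ‖K' x - K' y‖ ≤ M * ‖x - y‖) (hε : 0 < ε) (hεL : ε * L < m)
    (hT : ∀ y, (bregT f' g K K' ε y).Nonempty) (hγ : 0 < γ) (hη : 0 < η) (hν : 0 < ν)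
    (hc₃ : 0 ≤ c₃) (hEB : LevelSetSubdiffErrorBound (fun z => f z + g z) xbar γ η ν c₃) :
    ∃ N θ : ℝ, N > (2 * ε * ν / (m - ε * L)) / (η / 2) ^ 2 ∧ 0 < θ ∧
      ∀ y, ‖y - xbar‖ < η / 2 → f y + g y < f xbar + g xbar + ν / N →
        infDist y {z | f z + g z ≤ f xbar + g xbar} ^ max γ 1 ≤
          θ * infDist y (bregT f' g K K' ε y) := by
  have hgap : 0 < m - ε * L := sub_pos.2 hεL
  set a := (m / ε - L) / 2 with ha_def
  have ha : 0 < a := half_pos (sub_pos.2 ((lt_div_iff₀' hε).2 hεL))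
  set B := 2 * ε * ν / (m - ε * L) / (η / 2) ^ 2 with hB_def
  have hB : 0 < B := by positivity
  have hνB : ν = a * (η / 2) ^ 2 * B := by
    have hgap_ne : m - ε * L ≠ 0 := hgap.ne'
    rw [hB_def, ha_def]
    field_simp
  set θ := 2 ^ γ * η ^ (max γ 1 - γ) * (c₃ * (M / ε + L)) + 2 * η ^ (max γ 1 - 1)
  have hθ : 0 < θ := by positivity
  have hνN : ν / (B + 1) ≤ min ν (a * (η / 2) ^ 2) := by
    refine le_min (div_le_self hν.le (by linarith)) ((div_le_iff₀ (by positivity)).2 ?_)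
    linarith [(by positivity : 0 < a * (η / 2) ^ 2)]
  refine ⟨B + 1, θ, lt_add_one B, hθ, fun y hy hFy => ?_⟩
  have hyη : infDist y {z | f z + g z ≤ f xbar + g xbar} ≤ η :=
    calc infDist y {z | f z + g z ≤ f xbar + g xbar} ≤ dist y xbar :=
          infDist_le_dist_of_mem (le_refl (f xbar + g xbar))
      _ ≤ η := by rw [dist_eq_norm]; linarith
  refine (div_le_iff₀' hθ).1 ((le_infDist (hT y)).2 fun w hw => (div_le_iff₀' hθ).2 ?_)
  exact infDist_rpow_max_le_mul_dist hγ.le hyη <| hEB.infDist_rpow_le_of_isMinOn hγ hη hc₃ ha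
    (by positivity) (fun x => hasGradientAt_smul_sub (hK x) (hf x) ε⁻¹)
    (norm_smul_sub_sub_le hlip hKlip hε.le) (mul_sq_le_bregD_smul_sub hf hlip hKstrong hε.le y) hy
    (hFy.trans_le (by gcongr)) (mem_bregT_iff_isMinOn.1 hw)

end ProximalGradient

end InnerProductSpace

/-- Level-set subdifferential error bound implies level-set Bregman proximal error bound,
with exponent `p = max γ 1`. -/
theorem stmt9
    (f g : E → ℝ) (f' : E → E) (L : ℝ)
    (hL : 0 < L)
    (hf : ∀ x, HasGradientAt f (f' x) x)
    (hlip : ∀ x y, ‖f' x - f' y‖ ≤ L * ‖x - y‖)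
    (hg : Continuous g)
    (hlevel : ∀ r : ℝ, Bornology.IsBounded {x : E | f x + g x ≤ r})
    (K : E → ℝ) (K' : E → E) (m M : ℝ)
    (hm : 0 < m) (hmM : m ≤ M)
    (hK : ∀ x, HasGradientAt K (K' x) x)
    (hKstrong : ∀ x y : E, K x + ⟪K' x, y - x⟫ + m / 2 * ‖y - x‖ ^ 2 ≤ K y)
    (hKlip : ∀ x y, ‖K' x - K' y‖ ≤ M * ‖x - y‖)
    (ε : ℝ) (hε : 0 < ε)
    (hεL : ε * L < m)
    (xbar : E) (γ η ν c₃ : ℝ)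
    (hγ : 0 < γ) (hη : 0 < η) (hν : 0 < ν) (hc₃ : 0 < c₃)
    (hEB : ∀ y : E, ‖y - xbar‖ < η → f xbar + g xbar < f y + g y →
      f y + g y < f xbar + g xbar + ν →
      ∀ ξ ∈ proxSubdiff (fun z => f z + g z) y,
        Metric.infDist y {z : E | f z + g z ≤ f xbar + g xbar} ^ γ ≤ c₃ * ‖ξ‖) :
    ∃ N θ : ℝ, N > (2 * ε * ν / (m - ε * L)) / (η / 2) ^ 2 ∧ 0 < θ ∧
      ∀ y : E, ‖y - xbar‖ < η / 2 → f xbar + g xbar < f y + g y →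
        f y + g y < f xbar + g xbar + ν / N →
        Metric.infDist y {z : E | f z + g z ≤ f xbar + g xbar} ^ (max γ 1) ≤
          θ * Metric.infDist y (bregT f' g K K' ε y) := by
  obtain ⟨N, θ, hN, hθ, hbound⟩ := stmt9_general hL.le hf hlip (hm.le.trans hmM) hK hKstrong hKlip
    hε hεL (fun _ => bregT_nonempty hf hlip hg.lowerSemicontinuous (hlevel _) hK hKstrong hε hεL.le)
    hγ hη hν hc₃.le hEB
  exact ⟨N, θ, hN, hθ, fun y hy _ => hbound y hy⟩
end
end
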